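/- Let d ≥ 2 and let r ≥ 2d+2 be an arbitrary integer (not necessarily prime), N = (d+1)(r−1). Let f : Δ_N → ℝ^d be an affine map on the standard N-simplex whose N+1 vertices are colored with d+2 colors with color classes satisfying |C_0| = … = |C_d| = r−1 and |C_{d+1}| = 1, and suppose the N+1 image points f(v) of the vertices are in general position. If T(f) > 0, then T(f) ≥ 2^{r−2d−1}. -/

import Mathlib

open scoped Classical

/-- A set of points in `ℝ^d` is in *general position* if for every `j < d`,
no `j + 2` of the points lie on a common `j`-dimensional affine subspace. -/
def GenPos (d : ℕ) (P : Set (Fin d → ℝ)) : Prop :=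
  ∀ j < d, ∀ S : Finset (Fin d → ℝ), ↑S ⊆ P → S.card = j + 2 →
    ¬ ∃ A : AffineSubspace ℝ (Fin d → ℝ),
        Module.finrank ℝ A.direction = j ∧ (S : Set (Fin d → ℝ)) ⊆ (A : Set (Fin d → ℝ))

/-- `tverbergCount d N r f c` is the number of unordered colored Tverberg partitions for the
affine map `f` on the standard `N`-simplex (vertex `i` being `Pi.single i 1`), whose vertices
are colored by `c` with `d + 2` colors: partitions of the `N + 1` vertices into `r` rainbow
blocks whose images under `f` have intersecting convex hulls. -/
noncomputable def tverbergCount (d N r : ℕ) (f : (Fin (N + 1) → ℝ) →ᵃ[ℝ] (Fin d → ℝ))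
    (c : Fin (N + 1) → Fin (d + 2)) : ℕ :=
  Set.ncard { P : Finset (Finset (Fin (N + 1))) |
    P.card = r ∧
    (∀ B ∈ P, ∀ B' ∈ P, B ≠ B' → Disjoint B B') ∧
    P.biUnion id = Finset.univ ∧
    (∀ B ∈ P, ∀ j : Fin (d + 2), (B.filter fun i => c i = j).card ≤ 1) ∧
    ∃ x : Fin d → ℝ, ∀ B ∈ P,
      x ∈ convexHull ℝ ((fun i => f (Pi.single i 1)) '' (B : Set (Fin (N + 1)))) }


section Aux

lemma even_sum_aux {ι : Type*} [Fintype ι] (d : ℕ) (hd : 1 ≤ d)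
    (hk : d + 1 < Fintype.card ι) (g : Fin (d + 1) → (Fin (d + 1) → ι) → ZMod 2)
    (hg : ∀ m s s', (∀ j, j ≠ m → s j = s' j) → g m s = g m s') :
    ∑ σ ∈ (Finset.univ.filter fun σ : Fin (d + 1) → Equiv.Perm ι => σ 0 = 1),
      ∏ i, ∑ m, g m (fun j => σ j i) = 0 := by
  simp_rw [Finset.prod_univ_sum]
  rw [Finset.sum_comm]
  refine Finset.sum_eq_zero fun c _ => ?_
  obtain ⟨i, i', hne, hcc⟩ := Fintype.exists_ne_map_eq_of_card_lt c (by simpa using hk)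
  set m := c i with hm
  set τ := Equiv.swap i i' with hτ
  have hτne : τ ≠ 1 := by
    intro h
    have := congrArg (fun e : Equiv.Perm ι => e i) h
    simp [hτ] at this
    exact hne this.symm
  set D : Finset (Fin (d + 1)) :=
    if m = 0 then Finset.univ.filter (fun j => j ≠ 0) else {m} with hD
  have h0D : (0 : Fin (d + 1)) ∉ D := by
    rw [hD]; split_ifs with h
    · simp
    · simpa using fun h' => h h'.symm
  have hDne : ∃ j, j ∈ D := by
    rw [hD]; split_ifs with h
    · refine ⟨⟨1, by omega⟩, Finset.mem_filter.2 ⟨Finset.mem_univ _, fun h' => ?_⟩⟩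
      have := congrArg Fin.val h'
      simp only [Fin.val_zero] at this
      omega
    · exact ⟨m, by simp⟩
  have hττ : τ * τ = 1 := by simp [hτ]
  refine Finset.sum_involution (fun σ _ j => if j ∈ D then σ j * τ else σ j) ?_ ?_ ?_ ?_
  · intro σ hσ
    have : ∏ l, g (c l) (fun j => (if j ∈ D then σ j * τ else σ j) l)
        = ∏ l, g (c l) (fun j => σ j l) := by
      by_cases h : m = 0
      · rw [← Equiv.prod_comp τ (fun l => g (c l) (fun j => σ j l))]
        refine Finset.prod_congr rfl fun l _ => ?_
        have hcτ : c (τ l) = c l := by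
          rw [hτ, Equiv.swap_apply_def]; split_ifs with h1 h2
          · rw [h1, ← hcc]
          · rw [h2, ← hcc]
          · rfl
        rw [hcτ]
        by_cases hl : τ l = l
        · rw [hl]; congr 1; ext j; split_ifs <;> simp [hl]
        · have hcl : c l = 0 := by
            by_cases h1 : l = i
            · rw [h1, ← hm, h]
            by_cases h2 : l = i'
            · rw [h2, ← hcc, h]
            exact absurd (Equiv.swap_apply_of_ne_of_ne h1 h2) hl
          rw [hcl]
          refine hg _ _ _ fun j hj => ?_
          have : j ∈ D := by rw [hD, if_pos h]; simpa using hj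
          simp [this]
      · refine Finset.prod_congr rfl fun l _ => ?_
        by_cases hl : τ l = l
        · congr 1; ext j; split_ifs <;> simp [hl]
        · have hcl : c l = m := by
            by_cases h1 : l = i
            · rw [h1]
            by_cases h2 : l = i'
            · rw [h2, ← hcc]
            exact absurd (Equiv.swap_apply_of_ne_of_ne h1 h2) hl
          rw [hcl]
          refine hg _ _ _ fun j hj => ?_
          have : j ∉ D := by rw [hD, if_neg h]; simpa using hj
          simp [this]
    rw [this]
    exact CharTwo.add_self_eq_zero _
  · intro σ hσ _ heq
    obtain ⟨j, hj⟩ := hDne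
    have := congrFun heq j
    simp only [hj, if_true] at this
    exact hτne (by simpa using this)
  · intro σ hσ
    simpa [h0D] using hσ
  · intro σ hσ
    ext1 j
    dsimp only
    split_ifs
    · rw [mul_assoc, hττ, mul_one]
    · rfl

def HasZ {d : ℕ} (v : Fin (d + 1) → Fin d → ℝ) (w : Fin d → ℝ) (i : Fin (d + 1)) : Prop :=
  ∃ l : Fin (d + 1) → ℝ, (∀ j, 0 ≤ l j) ∧ ∑ j, l j • v j = w ∧ l i = 0

def Gen {d : ℕ} (v : Fin (d + 1) → Fin d → ℝ) (w : Fin d → ℝ) : Prop :=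
  ∀ l : Fin (d + 1) → ℝ, ∑ j, l j • v j = w → ∀ i i', l i = 0 → l i' = 0 → i = i'

def ZeroIn {d : ℕ} (v : Fin (d + 1) → Fin d → ℝ) : Prop :=
  ∃ l : Fin (d + 1) → ℝ, (∀ j, 0 ≤ l j) ∧ ∑ j, l j = 1 ∧ ∑ j, l j • v j = 0

lemma sum_line {d : ℕ} (v : Fin (d + 1) → Fin d → ℝ) (l n : Fin (d + 1) → ℝ) (t : ℝ)
    (w : Fin d → ℝ) (hl : ∑ j, l j • v j = w) (hn : ∑ j, n j • v j = 0) :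
    ∑ j, (l j + t * n j) • v j = w := by
  simp_rw [add_smul, mul_smul, Finset.sum_add_distrib, ← Finset.smul_sum]
  rw [hl, hn]; simp

lemma ker_zero {d : ℕ} (v : Fin (d + 1) → Fin d → ℝ) (w : Fin d → ℝ) (hg : Gen v w)
    (l n : Fin (d + 1) → ℝ) (hl : ∑ j, l j • v j = w) (hn : ∑ j, n j • v j = 0)
    (i : Fin (d + 1)) (hi : l i = 0) (hni : n i = 0) : n = 0 := by
  by_contra h
  obtain ⟨j, hj⟩ := Function.ne_iff.1 h
  have hj' : n j ≠ 0 := hj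
  have := hg _ (sum_line v l n (-(l j / n j)) w hl hn) i j (by simp [hi, hni])
    (by field_simp; ring)
  exact hj' (this ▸ hni)

/-- all kernel vectors are multiples -/
lemma ker_line {d : ℕ} (v : Fin (d + 1) → Fin d → ℝ) (w : Fin d → ℝ) (hg : Gen v w)
    (l m n : Fin (d + 1) → ℝ) (hl : ∑ j, l j • v j = w) (hm : ∑ j, m j • v j = 0)
    (hn : ∑ j, n j • v j = 0)
    (i : Fin (d + 1)) (hi : l i = 0) (hmi : m i ≠ 0) : ∀ j, n j = n i / m i * m j := by
  have := ker_zero v w hg l (fun j => n j + (-(n i / m i)) * m j) hl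
    (sum_line v n m _ 0 hn hm) i hi (by field_simp; ring)
  intro j
  have := congrFun this j
  simp at this
  linarith

lemma parity_zero {d : ℕ} (v : Fin (d + 1) → Fin d → ℝ) (w : Fin d → ℝ) (hg : Gen v w)
    (h : (∑ i, if HasZ v w i then (1 : ZMod 2) else 0) ≠ 0) : ZeroIn v := by
  by_contra h0
  apply h
  rw [Finset.sum_boole]
  by_cases hE : ∃ i, HasZ v w i
  swap
  · push Not at hE
    simp [hE]
  obtain ⟨i, l, hl0, hl, hli⟩ := hE
  have hker : ∃ m : Fin (d + 1) → ℝ, ∑ j, m j • v j = 0 ∧ ∃ i, m i ≠ 0 := by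
    have : ¬ LinearIndependent ℝ v := by
      intro hv
      have := hv.fintype_card_le_finrank
      simp at this
    exact Fintype.not_linearIndependent_iff.1 this
  obtain ⟨m, hm, im, him⟩ := hker
  have hmi : m i ≠ 0 := by
    intro h
    exact him (congrFun (ker_zero v w hg l m hl hm i hli h) im)
  obtain ⟨n, hn, hni⟩ : ∃ n : Fin (d + 1) → ℝ, ∑ j, n j • v j = 0 ∧ n i = 1 := by
    refine ⟨fun j => (m i)⁻¹ * m j, ?_, by field_simp⟩
    simp_rw [mul_smul, ← Finset.smul_sum]; rw [hm]; simp
  have hneg : ∃ j, n j < 0 := by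
    by_contra! hh
    apply h0
    have hs : 0 < ∑ j, n j := by
      refine Finset.sum_pos' (fun j _ => hh j) ⟨i, Finset.mem_univ _, by rw [hni]; norm_num⟩
    refine ⟨fun j => (∑ j, n j)⁻¹ * n j, fun j => mul_nonneg (by positivity) (hh j), ?_, ?_⟩
    · rw [← Finset.mul_sum]; field_simp
    · simp_rw [mul_smul, ← Finset.smul_sum]; rw [hn]; simp
  have hlpos : ∀ j, j ≠ i → 0 < l j := fun j hj =>
    lt_of_le_of_ne (hl0 j) fun h => hj (hg l hl j i h.symm hli)
  obtain ⟨j0, hj0, hmin⟩ := Finset.exists_min_image (Finset.univ.filter fun j => n j < 0)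
    (fun j => l j / (- n j)) (by obtain ⟨j, hj⟩ := hneg; exact ⟨j, by simpa using hj⟩)
  simp only [Finset.mem_filter, Finset.mem_univ, true_and] at hj0 hmin
  have hj0i : j0 ≠ i := by rintro rfl; rw [hni] at hj0; norm_num at hj0
  set T := l j0 / (- n j0) with hT
  have hTpos : 0 < T := div_pos (hlpos _ hj0i) (by linarith)
  have hTz : l j0 + T * n j0 = 0 := by
    have : n j0 ≠ 0 := hj0.ne
    rw [hT]; field_simp; ring
  have hset : (Finset.univ.filter fun i => HasZ v w i) = {i, j0} := by
    ext a
    simp only [Finset.mem_filter, Finset.mem_univ, true_and, Finset.mem_insert,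
      Finset.mem_singleton]
    constructor
    · rintro ⟨l', hl'0, hl', hla⟩
      have hdiff : ∑ j, (l' j - l j) • v j = 0 := by
        simp_rw [sub_smul, Finset.sum_sub_distrib]; rw [hl, hl', sub_self]
      have hk := ker_line v w hg l n (fun j => l' j - l j) hl hn hdiff i hli (by rw [hni]; norm_num)
      simp only [hni, hli, div_one, sub_zero] at hk
      set t := l' i with ht
      have ht0 : 0 ≤ t := hl'0 i
      by_contra! hcon
      have hla' : 0 < l a := hlpos a hcon.1
      have e1 := hk a
      rw [hla] at e1
      have hna : n a < 0 := by
        by_contra! hh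
        nlinarith [mul_nonneg ht0 hh]
      have hTa := hmin a hna
      have ht' : t = l a / (- n a) := by
        have : n a ≠ 0 := hna.ne
        field_simp; linarith
      have e2 := hk j0
      have h3 := hl'0 j0
      have hl'j : l' j0 = 0 := by
        apply le_antisymm _ h3
        nlinarith
      exact hcon.2 (hg l' hl' a j0 hla hl'j)
    · rintro (rfl | rfl)
      · exact ⟨l, hl0, hl, hli⟩
      · refine ⟨fun j => l j + T * n j, fun j => ?_, sum_line v l n T w hl hn, hTz⟩
        by_cases hnj : n j < 0
        · have := hmin j hnj
          rw [le_div_iff₀ (by linarith)] at this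
          linarith
        · push Not at hnj
          have := mul_nonneg hTpos.le hnj
          linarith [hl0 j]
  rw [hset, Finset.card_pair hj0i.symm]
  rfl

lemma parity_one {d : ℕ} (v : Fin (d + 1) → Fin d → ℝ) (w : Fin d → ℝ) (hg : Gen v w)
    (n : Fin (d + 1) → ℝ) (hn : ∑ j, n j • v j = 0) (hnpos : ∀ j, 0 < n j)
    (hs : ∃ l : Fin (d + 1) → ℝ, ∑ j, l j • v j = w) :
    (∑ i, if HasZ v w i then (1 : ZMod 2) else 0) = 1 := by
  obtain ⟨q, hq⟩ := hs
  rw [Finset.sum_boole]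
  obtain ⟨j0, -, hmax⟩ := Finset.exists_max_image (Finset.univ : Finset (Fin (d + 1)))
    (fun j => - q j / n j) ⟨0, Finset.mem_univ _⟩
  set T := - q j0 / n j0 with hT
  set l : Fin (d + 1) → ℝ := fun j => q j + T * n j with hldef
  have hl : ∑ j, l j • v j = w := sum_line v q n T w hq hn
  have hl0 : ∀ j, 0 ≤ l j := by
    intro j
    have := hmax j (Finset.mem_univ _)
    rw [div_le_iff₀ (hnpos j)] at this
    simp only [hldef]; linarith
  have hlj : l j0 = 0 := by
    have := (hnpos j0).ne'
    simp only [hldef, hT]; field_simp; ring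
  have hset : (Finset.univ.filter fun i => HasZ v w i) = {j0} := by
    ext a
    simp only [Finset.mem_filter, Finset.mem_univ, true_and, Finset.mem_singleton]
    constructor
    · rintro ⟨l', hl'0, hl', hla⟩
      have hdiff : ∑ j, (l' j - l j) • v j = 0 := by
        simp_rw [sub_smul, Finset.sum_sub_distrib]; rw [hl, hl', sub_self]
      have hk := ker_line v w hg l n (fun j => l' j - l j) hl hn hdiff j0 hlj (hnpos j0).ne'
      simp only [hlj, sub_zero] at hk
      have ht0 : 0 ≤ l' j0 / n j0 := div_nonneg (hl'0 j0) (hnpos j0).le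
      have e := hk a
      rw [hla] at e
      have : l a = 0 := le_antisymm (by nlinarith [mul_nonneg ht0 (hnpos a).le]) (hl0 a)
      exact hg l hl a j0 this hlj
    · rintro rfl
      exact ⟨l, hl0, hl, hlj⟩
  rw [hset]; simp

lemma hasZ_congr {d : ℕ} (v v' : Fin (d + 1) → Fin d → ℝ) (w : Fin d → ℝ) (m : Fin (d + 1))
    (h : ∀ j, j ≠ m → v j = v' j) : HasZ v w m ↔ HasZ v' w m := by
  unfold HasZ
  refine exists_congr fun l => and_congr_right fun _ => ?_
  rw [and_comm, and_comm (b := l m = 0)]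
  refine and_congr_right fun hm => ?_
  have : ∑ j, l j • v j = ∑ j, l j • v' j := by
    refine Finset.sum_congr rfl fun j _ => ?_
    by_cases hj : j = m
    · rw [hj, hm]; simp
    · rw [h j hj]
  rw [this]

def genSub {ι : Type*} {d : ℕ} (u : ι → Fin (d + 1) → Fin d → ℝ)
    (p : (Fin (d + 1) → ι) × Fin (d + 1) × Fin (d + 1)) : Submodule ℝ (Fin d → ℝ) :=
  Submodule.span ℝ (((Finset.univ.erase p.2.1).erase p.2.2).image (fun j => u (p.1 j) j) :
          Finset (Fin d → ℝ))

lemma genSub_ne_top {ι : Type*} {d : ℕ} (hd : 1 ≤ d) (u : ι → Fin (d + 1) → Fin d → ℝ)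
    (p : (Fin (d + 1) → ι) × Fin (d + 1) × Fin (d + 1)) (hp : p.2.1 ≠ p.2.2) :
    genSub u p ≠ ⊤ := by
  intro h
  have h1 : Module.finrank ℝ (genSub u p) < d := by
    refine lt_of_le_of_lt (finrank_span_finset_le_card _)
      (lt_of_le_of_lt Finset.card_image_le ?_)
    rw [Finset.card_erase_of_mem (Finset.mem_erase.2 ⟨hp.symm, Finset.mem_univ _⟩),
      Finset.card_erase_of_mem (Finset.mem_univ _), Finset.card_univ, Fintype.card_fin]
    omega
  rw [h, finrank_top, Module.finrank_fin_fun] at h1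
  exact lt_irrefl _ h1

lemma exists_gen {ι : Type*} [Fintype ι] (d : ℕ) (hd : 1 ≤ d)
    (u : ι → Fin (d + 1) → Fin d → ℝ) :
    ∃ w, ∀ s : Fin (d + 1) → ι, Gen (fun j => u (s j) j) w := by
  let S : Finset (Submodule ℝ (Fin d → ℝ)) :=
    ((Finset.univ : Finset ((Fin (d + 1) → ι) × Fin (d + 1) × Fin (d + 1))).filter
      fun p => p.2.1 ≠ p.2.2).image (genSub u)
  have htop : ⊤ ∉ S := by
    intro h
    obtain ⟨p, hp, hp'⟩ := Finset.mem_image.1 h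
    exact genSub_ne_top hd u p (Finset.mem_filter.1 hp).2 hp'
  have := Subspace.biUnion_ne_univ_of_top_notMem htop
  obtain ⟨w, hw⟩ := (Set.ne_univ_iff_exists_notMem _).1 this
  refine ⟨w, fun s l hl i i' hi hi' => ?_⟩
  by_contra hne
  apply hw
  refine Set.mem_biUnion (x := genSub u (s, i, i')) ?_ ?_
  · exact Finset.mem_coe.2 (Finset.mem_image.2
      ⟨(s, i, i'), Finset.mem_filter.2 ⟨Finset.mem_univ _, hne⟩, rfl⟩)
  · rw [← hl]
    refine Submodule.sum_mem _ fun j _ => ?_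
    by_cases h1 : j = i
    · rw [h1, hi]; simp
    by_cases h2 : j = i'
    · rw [h2, hi']; simp
    refine Submodule.smul_mem _ _ (Submodule.subset_span ?_)
    exact Finset.mem_coe.2 (Finset.mem_image.2 ⟨j, by simp [h1, h2], rfl⟩)

lemma second_strict {ι : Type*} [Fintype ι] (d : ℕ) (hd : 1 ≤ d)
    (hk : d + 1 < Fintype.card ι) (u : ι → Fin (d + 1) → Fin d → ℝ)
    (hs : ∀ i w, ∃ l : Fin (d + 1) → ℝ, ∑ j, l j • u i j = w)
    (hp : ∀ i, ∃ n : Fin (d + 1) → ℝ, (∀ j, 0 < n j) ∧ ∑ j, n j • u i j = 0) :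
    ∃ σ : Fin (d + 1) → Equiv.Perm ι, σ 0 = 1 ∧ σ ≠ 1 ∧
      ∀ i, ZeroIn (fun j => u (σ j i) j) := by
  obtain ⟨w, hw⟩ := exists_gen d hd u
  have h := even_sum_aux (ι := ι) d hd hk
    (fun m s => if HasZ (fun j => u (s j) j) w m then (1 : ZMod 2) else 0) (by
      intro m s s' hss
      have := hasZ_congr (fun j => u (s j) j) (fun j => u (s' j) j) w m
        (fun j hj => by simp only [hss j hj])
      simp only [this])
  by_contra! hcon
  rw [Finset.sum_eq_single (1 : Fin (d + 1) → Equiv.Perm ι)] at h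
  · rw [Finset.prod_eq_one] at h
    · exact one_ne_zero h
    · intro i _
      obtain ⟨n, hn, hn0⟩ := hp i
      exact parity_one (fun j => u i j) w (hw fun _ => i) n hn0 hn (hs i w)
  · intro σ hσ hne
    obtain ⟨i, hi⟩ := hcon σ (by simpa using hσ) hne
    refine Finset.prod_eq_zero (Finset.mem_univ i) ?_
    by_contra h0
    exact hi (parity_zero _ w (hw fun j => σ j i) h0)
  · intro h; simp at h

end Aux

section Aux2

lemma mem_convexHull_range' {d : ℕ} (v : Fin (d + 1) → Fin d → ℝ) (x : Fin d → ℝ) :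
    x ∈ convexHull ℝ (Set.range v) ↔ ZeroIn (fun j => v j - x) := by
  have key : ∀ l : Fin (d + 1) → ℝ, ∑ j, l j = 1 →
      ∑ j, l j • (v j - x) = ∑ j, l j • v j - x := by
    intro l hl
    simp_rw [smul_sub, Finset.sum_sub_distrib, ← Finset.sum_smul]
    rw [hl, one_smul]
  constructor
  · intro h
    have hsub : convexHull ℝ (Set.range v) ⊆
        (Fintype.linearCombination ℝ v) '' stdSimplex ℝ (Fin (d + 1)) := by
      refine convexHull_min ?_ ((convex_stdSimplex ℝ _).linear_image _)
      rintro _ ⟨j, rfl⟩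
      exact ⟨Pi.single j 1, single_mem_stdSimplex ℝ j, by simp⟩
    obtain ⟨l, ⟨hl0, hl1⟩, hl⟩ := hsub h
    refine ⟨l, hl0, hl1, ?_⟩
    rw [key l hl1, sub_eq_zero, ← hl, Fintype.linearCombination_apply]
  · rintro ⟨l, hl0, hl1, hl⟩
    rw [key l hl1, sub_eq_zero] at hl
    exact mem_convexHull_of_exists_fintype l v hl0 hl1 (fun i => ⟨i, rfl⟩) hl

lemma sep_of_not_zeroIn {d : ℕ} (v : Fin (d + 1) → Fin d → ℝ) (h : ¬ ZeroIn v) :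
    ∃ f : StrongDual ℝ (Fin d → ℝ), ∀ j, 0 < f (v j) := by
  have h0 : (0 : Fin d → ℝ) ∉ convexHull ℝ (Set.range v) := by
    rw [mem_convexHull_range']; simpa using h
  obtain ⟨f, a, h1, h2⟩ := geometric_hahn_banach_point_closed (convex_convexHull ℝ _)
    ((Set.finite_range v).isClosed_convexHull (𝕜 := ℝ)) h0
  refine ⟨f, fun j => ?_⟩
  have := h2 (v j) (subset_convexHull ℝ _ ⟨j, rfl⟩)
  simp at h1
  linarith

lemma not_zeroIn_of_sep {d : ℕ} (v : Fin (d + 1) → Fin d → ℝ)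
    (f : StrongDual ℝ (Fin d → ℝ)) (hf : ∀ j, 0 < f (v j)) : ¬ ZeroIn v := by
  rintro ⟨l, hl0, hl1, hl⟩
  have h := congrArg f hl
  rw [map_sum, map_zero] at h
  simp only [map_smul, smul_eq_mul] at h
  have h2 := (Finset.sum_eq_zero_iff_of_nonneg
    (fun j _ => mul_nonneg (hl0 j) (hf j).le)).1 h
  have : ∑ j, l j = 0 := Finset.sum_eq_zero fun j hj => by
    rcases mul_eq_zero.1 (h2 j hj) with h | h
    · exact h
    · exact absurd h (hf j).ne'
  linarith

lemma second_weak {ι : Type*} [Fintype ι] (d : ℕ) (hd : 1 ≤ d)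
    (hk : d + 1 < Fintype.card ι) (u : ι → Fin (d + 1) → Fin d → ℝ)
    (hs : ∀ i w, ∃ l : Fin (d + 1) → ℝ, ∑ j, l j = 1 ∧ ∑ j, l j • u i j = w)
    (hp : ∀ i, ZeroIn (u i)) :
    ∃ σ : Fin (d + 1) → Equiv.Perm ι, σ 0 = 1 ∧ σ ≠ 1 ∧
      ∀ i, ZeroIn (fun j => u (σ j i) j) := by
  let b : ι → Fin d → ℝ := fun i => ∑ j, u i j
  have hev : ∀ᶠ ε in nhdsWithin (0 : ℝ) (Set.Ioi 0), ∀ s : Fin (d + 1) → ι,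
      ZeroIn (fun j => u (s j) j - ε • b (s j)) → ZeroIn (fun j => u (s j) j) := by
    rw [Filter.eventually_all]
    intro s
    by_cases h : ZeroIn (fun j => u (s j) j)
    · exact Filter.Eventually.of_forall fun _ _ => h
    obtain ⟨f, hf⟩ := sep_of_not_zeroIn _ h
    have : ∀ᶠ ε in nhdsWithin (0 : ℝ) (Set.Ioi 0), ∀ j,
        0 < f (u (s j) j - ε • b (s j)) := by
      rw [Filter.eventually_all]
      intro j
      apply Filter.Eventually.filter_mono nhdsWithin_le_nhds
      have hc : Continuous fun ε : ℝ => f (u (s j) j - ε • b (s j)) := by fun_prop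
      exact (hc.tendsto 0).eventually_const_lt (by simpa using hf j)
    filter_upwards [this] with ε hε hz
    exact absurd hz (not_zeroIn_of_sep _ f hε)
  have hdp : (0 : ℝ) < d + 1 := by positivity
  obtain ⟨ε, hε, hε0, hε1⟩ :=
    (hev.and (Ioo_mem_nhdsGT (show (0 : ℝ) < 1 / (d + 1) by positivity))).exists
  have hsmall : ε * (d + 1) < 1 := by rwa [lt_div_iff₀ hdp] at hε1
  have key : ∀ i (l : Fin (d + 1) → ℝ), ∑ j, l j • (u i j - ε • b i)
      = ∑ j, l j • u i j - (∑ j, l j) • ε • b i := by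
    intro i l
    simp_rw [smul_sub, Finset.sum_sub_distrib, ← Finset.sum_smul]
  obtain ⟨σ, h0, h1, h2⟩ := second_strict d hd hk (fun i j => u i j - ε • b i) (by
      intro i w
      obtain ⟨l, hl1, hl⟩ := hs i (w + ε • b i)
      exact ⟨l, by rw [key, hl, hl1]; simp⟩) (by
      intro i
      obtain ⟨l, hl0, hl1, hl⟩ := hp i
      · refine ⟨fun j => (1 - ε * (d + 1)) * l j + ε, fun j => ?_, ?_⟩
        · have := mul_nonneg (sub_nonneg.2 hsmall.le) (hl0 j)
          linarith
        · rw [key]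
          have e1 : ∑ j, ((1 - ε * (d + 1)) * l j + ε) = 1 := by
            rw [Finset.sum_add_distrib, ← Finset.mul_sum, hl1]
            simp; ring
          rw [e1]
          simp_rw [add_smul, mul_smul, Finset.sum_add_distrib, ← Finset.smul_sum]
          rw [hl]; simp [b])
  exact ⟨σ, h0, h1, fun i => hε _ (h2 i)⟩

def Blk {V : Type*} {d : ℕ} (y : V → Fin d → ℝ) (x : Fin d → ℝ) (c : V → Fin (d + 1))
    (B : Finset V) : Prop :=
  B.card = d + 1 ∧ Set.InjOn c B ∧ x ∈ convexHull ℝ (y '' (B : Set V))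

def Fam {V : Type*} {d : ℕ} (y : V → Fin d → ℝ) (x : Fin d → ℝ) (c : V → Fin (d + 1))
    (P : Finset (Finset V)) : Prop :=
  (∀ B ∈ P, Blk y x c B) ∧ (∀ B ∈ P, ∀ B' ∈ P, B ≠ B' → Disjoint B B')

lemma second_fam {V : Type*} [DecidableEq V] {d : ℕ} (hd : 1 ≤ d) (y : V → Fin d → ℝ) (x : Fin d → ℝ)
    (c : V → Fin (d + 1))
    (hy : ∀ p : Fin (d + 1) → V, Function.Injective p → ∀ w,
      ∃ l : Fin (d + 1) → ℝ, ∑ j, l j = 1 ∧ ∑ j, l j • y (p j) = w)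
    (P : Finset (Finset V)) (hP : Fam y x c P) (hk : d + 1 < P.card) :
    ∃ Q, Fam y x c Q ∧ Q.biUnion id = P.biUnion id ∧ Q.card = P.card ∧ Q ≠ P := by
  have hpt : ∀ (B : P) (j : Fin (d + 1)), ∃ v ∈ B.1, c v = j := by
    intro B j
    obtain ⟨h1, h2, -⟩ := hP.1 B.1 B.2
    have : B.1.image c = Finset.univ := by
      rw [← Finset.card_eq_iff_eq_univ, Finset.card_image_of_injOn h2, h1]; simp
    have := this ▸ Finset.mem_univ j
    simpa using this
  choose pt hpt1 hpt2 using hpt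
  have hptB : ∀ (B B' : P) v, v ∈ B.1 → v ∈ B'.1 → B = B' := by
    intro B B' v h h'
    by_contra hne
    exact Finset.disjoint_left.1 (hP.2 B.1 B.2 B'.1 B'.2 (fun h => hne (Subtype.ext h))) h h'
  have hptinj : ∀ B B' j j', pt B j = pt B' j' → B = B' ∧ j = j' := by
    intro B B' j j' h
    refine ⟨hptB B B' (pt B j) (hpt1 _ _) (h ▸ hpt1 _ _), ?_⟩
    rw [← hpt2 B j, h, hpt2]
  have hptsurj : ∀ (B : P) v, v ∈ B.1 → pt B (c v) = v := by
    intro B v hv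
    exact (hP.1 B.1 B.2).2.1 (hpt1 _ _) hv (hpt2 _ _)
  obtain ⟨σ, h0, h1, h2⟩ := second_weak (ι := P) d hd (by simpa using hk)
    (fun B j => y (pt B j) - x) (by
      intro B w
      obtain ⟨l, hl1, hl⟩ := hy (pt B) (fun j j' h => (hptinj _ _ _ _ h).2) (w + x)
      refine ⟨l, hl1, ?_⟩
      simp_rw [smul_sub, Finset.sum_sub_distrib, ← Finset.sum_smul]
      rw [hl, hl1]; simp) (by
      intro B
      rw [← mem_convexHull_range' (fun j => y (pt B j)) x]
      have : (Set.range fun j => y (pt B j)) = y '' (B.1 : Set V) := by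
        ext z; constructor
        · rintro ⟨j, rfl⟩; exact ⟨_, hpt1 B j, rfl⟩
        · rintro ⟨v, hv, rfl⟩; exact ⟨c v, by simp only [hptsurj B v hv]⟩
      rw [this]
      exact (hP.1 B.1 B.2).2.2)
  let nb : P → Finset V := fun B => Finset.univ.image fun j => pt (σ j B) j
  have hnb : ∀ B v, v ∈ nb B ↔ ∃ j, pt (σ j B) j = v := by intro B v; simp [nb]
  have hnbB : ∀ B B' v, v ∈ nb B → v ∈ nb B' → B = B' := by
    intro B B' v h h'
    obtain ⟨j, rfl⟩ := (hnb _ _).1 h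
    obtain ⟨j', hj'⟩ := (hnb _ _).1 h'
    obtain ⟨e1, rfl⟩ := hptinj _ _ _ _ hj'
    exact ((σ j').injective e1).symm
  have hnbinj : Function.Injective nb := by
    intro B B' h
    exact hnbB B B' (pt (σ 0 B) 0) ((hnb _ _).2 ⟨0, rfl⟩) (h ▸ (hnb _ _).2 ⟨0, rfl⟩)
  refine ⟨Finset.univ.image nb, ⟨?_, ?_⟩, ?_, ?_, ?_⟩
  · intro B hB
    obtain ⟨B, -, rfl⟩ := Finset.mem_image.1 hB
    refine ⟨?_, ?_, ?_⟩
    · rw [Finset.card_image_of_injective _ fun j j' h => (hptinj _ _ _ _ h).2]; simp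
    · intro v hv v' hv' h
      obtain ⟨j, rfl⟩ := (hnb _ _).1 hv
      obtain ⟨j', rfl⟩ := (hnb _ _).1 hv'
      rw [hpt2, hpt2] at h
      rw [h]
    · have := (mem_convexHull_range' (fun j => y (pt (σ j B) j)) x).2 (h2 B)
      have e : (Set.range fun j => y (pt (σ j B) j)) = y '' (nb B : Set V) := by
        ext z; simp [nb]
      rwa [← e]
  · intro B hB B' hB' hne
    obtain ⟨B, -, rfl⟩ := Finset.mem_image.1 hB
    obtain ⟨B', -, rfl⟩ := Finset.mem_image.1 hB'
    rw [Finset.disjoint_left]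
    intro v hv hv'
    exact hne (congrArg nb (hnbB B B' v hv hv'))
  · ext v
    simp only [Finset.mem_biUnion, Finset.mem_image, Finset.mem_univ, true_and, id]
    constructor
    · rintro ⟨_, ⟨B, rfl⟩, hv⟩
      obtain ⟨j, rfl⟩ := (hnb _ _).1 hv
      exact ⟨(σ j B).1, (σ j B).2, hpt1 _ _⟩
    · rintro ⟨B, hB, hv⟩
      refine ⟨_, ⟨(σ (c v)).symm ⟨B, hB⟩, rfl⟩, (hnb _ _).2 ⟨c v, ?_⟩⟩
      rw [Equiv.apply_symm_apply]
      exact hptsurj ⟨B, hB⟩ v hv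
  · rw [Finset.card_image_of_injective _ hnbinj]; simp
  · intro hQP
    apply h1
    ext1 j
    ext1 B
    have hmem : nb B ∈ P := hQP ▸ Finset.mem_image_of_mem _ (Finset.mem_univ B)
    have e1 := hptB ⟨nb B, hmem⟩ B (pt B 0) ((hnb _ _).2 ⟨0, by rw [h0]; rfl⟩) (hpt1 _ _)
    have e2 := hptB ⟨nb B, hmem⟩ (σ j B) (pt (σ j B) j) ((hnb _ _).2 ⟨j, rfl⟩) (hpt1 _ _)
    rw [← e2, e1]; rfl

lemma fam_count {V : Type*} [Fintype V] [DecidableEq V] {d : ℕ} (hd : 1 ≤ d) (y : V → Fin d → ℝ)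
    (x : Fin d → ℝ) (c : V → Fin (d + 1))
    (hy : ∀ p : Fin (d + 1) → V, Function.Injective p → ∀ w,
      ∃ l : Fin (d + 1) → ℝ, ∑ j, l j = 1 ∧ ∑ j, l j • y (p j) = w) (k : ℕ) :
    ∀ P : Finset (Finset V), Fam y x c P → P.card = k →
      2 ^ (k - d - 1) ≤ (Finset.univ.filter fun Q => Fam y x c Q ∧
        Q.biUnion id = P.biUnion id ∧ Q.card = P.card).card := by
  induction k with
  | zero =>
    intro P hP _
    rw [show 0 - d - 1 = 0 by omega, pow_zero]
    exact Finset.card_pos.2 ⟨P, by simp [hP]⟩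
  | succ k ih =>
    intro P hP hk
    by_cases hkd : k ≤ d
    · rw [show k + 1 - d - 1 = 0 by omega, pow_zero]
      exact Finset.card_pos.2 ⟨P, by simp [hP]⟩
    push Not at hkd
    obtain ⟨Q, hQ, hQU, hQc, hne⟩ := second_fam hd y x c hy P hP (by omega)
    obtain ⟨B', hB'Q, hB'P⟩ : ∃ B' ∈ Q, B' ∉ P := by
      by_contra! h
      exact hne (Finset.eq_of_subset_of_card_le h hQc.ge)
    obtain ⟨v, hv⟩ : B'.Nonempty := Finset.card_pos.1 (by rw [(hQ.1 _ hB'Q).1]; omega)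
    obtain ⟨B, hBP, hvB⟩ : ∃ B ∈ P, v ∈ B := by
      have : v ∈ Q.biUnion id := Finset.mem_biUnion.2 ⟨B', hB'Q, hv⟩
      rw [hQU] at this
      simpa using this
    have hBB : B ≠ B' := by rintro rfl; exact hB'P hBP
    have ext : ∀ R : Finset (Finset V), Fam y x c R → R.card = k + 1 → ∀ A ∈ R,
        R.biUnion id = P.biUnion id →
        2 ^ (k - d - 1) ≤ (Finset.univ.filter fun Q => (Fam y x c Q ∧
          Q.biUnion id = P.biUnion id ∧ Q.card = P.card) ∧ A ∈ Q).card := by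
      intro R hR hRc A hA hRU
      have hRe : Fam y x c (R.erase A) :=
        ⟨fun B hB => hR.1 B (Finset.mem_of_mem_erase hB), fun B hB B' hB' =>
          hR.2 B (Finset.mem_of_mem_erase hB) B' (Finset.mem_of_mem_erase hB')⟩
      refine le_trans (ih (R.erase A) hRe (by rw [Finset.card_erase_of_mem hA, hRc]; rfl)) ?_
      have hAne : A.Nonempty := Finset.card_pos.1 (by rw [(hR.1 _ hA).1]; omega)
      have hdisj : ∀ S : Finset (Finset V), S.biUnion id = (R.erase A).biUnion id →
          ∀ C ∈ S, Disjoint A C := by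
        intro S hS C hC
        rw [Finset.disjoint_left]
        intro a ha haC
        have : a ∈ S.biUnion id := Finset.mem_biUnion.2 ⟨C, hC, haC⟩
        rw [hS] at this
        obtain ⟨D, hD, haD⟩ := Finset.mem_biUnion.1 this
        have hD' := Finset.mem_erase.1 hD
        exact Finset.disjoint_left.1 (hR.2 D hD'.2 A hA hD'.1) haD ha
      have hnot : ∀ S : Finset (Finset V), S.biUnion id = (R.erase A).biUnion id → A ∉ S := by
        intro S hS hAS
        exact hAne.ne_empty (disjoint_self.1 (hdisj S hS A hAS))
      refine Finset.card_le_card_of_injOn (fun S => insert A S) ?_ ?_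
      · intro S hS
        obtain ⟨hSF, hSU, hSc⟩ := (Finset.mem_filter.1 hS).2
        refine Finset.mem_coe.2 (Finset.mem_filter.2 ⟨Finset.mem_univ _,
          ⟨⟨?_, ?_⟩, ?_, ?_⟩, Finset.mem_insert_self _ _⟩)
        · intro C hC
          rcases Finset.mem_insert.1 hC with rfl | hC
          · exact hR.1 _ hA
          · exact hSF.1 _ hC
        · intro C hC D hD hCD
          rcases Finset.mem_insert.1 hC with hC1 | hC1 <;>
            rcases Finset.mem_insert.1 hD with hD1 | hD1
          · exact absurd (hC1.trans hD1.symm) hCD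
          · rw [hC1]; exact hdisj S hSU D hD1
          · rw [hD1]; exact (hdisj S hSU C hC1).symm
          · exact hSF.2 C hC1 D hD1 hCD
        · rw [Finset.biUnion_insert, hSU, ← hRU, ← Finset.biUnion_insert,
            Finset.insert_erase hA]
        · rw [Finset.card_insert_of_notMem (hnot S hSU), hSc, Finset.card_erase_add_one hA,
            hRc, hk]
      · intro S hS T hT hST
        have h1 := hnot S (Finset.mem_filter.1 hS).2.2.1
        have h2 := hnot T (Finset.mem_filter.1 hT).2.2.1
        have := congrArg (fun X => Finset.erase X A) hST
        simpa [Finset.erase_insert h1, Finset.erase_insert h2] using this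
    have e1 := ext P hP hk B hBP rfl
    have e2 := ext Q hQ (hQc.trans hk) B' hB'Q hQU
    have hdj : Disjoint
        (Finset.univ.filter fun Q => (Fam y x c Q ∧
          Q.biUnion id = P.biUnion id ∧ Q.card = P.card) ∧ B ∈ Q)
        (Finset.univ.filter fun Q => (Fam y x c Q ∧
          Q.biUnion id = P.biUnion id ∧ Q.card = P.card) ∧ B' ∈ Q) := by
      rw [Finset.disjoint_left]
      intro S h1 h2
      have h1 := (Finset.mem_filter.1 h1).2
      have h2 := (Finset.mem_filter.1 h2).2
      exact Finset.disjoint_left.1 (h1.1.1.2 B h1.2 B' h2.2 hBB) hvB hv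
    calc 2 ^ (k + 1 - d - 1) = 2 ^ (k - d - 1) + 2 ^ (k - d - 1) := by
          rw [show k + 1 - d - 1 = (k - d - 1) + 1 by omega, pow_succ]; omega
      _ ≤ _ := add_le_add e1 e2
      _ = _ := (Finset.card_union_of_disjoint hdj).symm
      _ ≤ _ := Finset.card_le_card (by
          intro S hS
          rcases Finset.mem_union.1 hS with h | h
          · exact Finset.mem_filter.2 ⟨Finset.mem_univ _, (Finset.mem_filter.1 h).2.1⟩
          · exact Finset.mem_filter.2 ⟨Finset.mem_univ _, (Finset.mem_filter.1 h).2.1⟩)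

end Aux2

section Aux3

lemma span_of_genPos {d : ℕ} (hd : 1 ≤ d) {V : Type*} (y : V → Fin d → ℝ)
    (hinj : Function.Injective y) (hgen : GenPos d (Set.range y))
    (p : Fin (d + 1) → V) (hp : Function.Injective p) (w : Fin d → ℝ) :
    ∃ l : Fin (d + 1) → ℝ, ∑ j, l j = 1 ∧ ∑ j, l j • y (p j) = w := by
  have hAI : AffineIndependent ℝ (fun j => y (p j)) := by
    by_contra h
    have hcard : Fintype.card (Fin (d + 1)) = (d - 1) + 2 := by simp; omega
    have hle := (finrank_vectorSpan_le_iff_not_affineIndependent ℝ (fun j => y (p j)) hcard).2 h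
    set A := affineSpan ℝ (Set.range fun j => y (p j)) with hA
    set k := Module.finrank ℝ A.direction with hk
    have hkd : k ≤ d - 1 := by rw [hk, hA, direction_affineSpan]; exact hle
    have hT : (Finset.univ.image fun j => y (p j)).card = d + 1 := by
      rw [Finset.card_image_of_injective _ (fun a b h => hp (hinj h))]; simp
    obtain ⟨S, hS, hSc⟩ := Finset.exists_subset_card_eq
      (show k + 2 ≤ (Finset.univ.image fun j => y (p j)).card by rw [hT]; omega)
    refine hgen k (by omega) S ?_ hSc ⟨A, rfl, ?_⟩
    · intro z hz
      obtain ⟨j, -, rfl⟩ := Finset.mem_image.1 (hS hz)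
      exact ⟨p j, rfl⟩
    · intro z hz
      obtain ⟨j, -, rfl⟩ := Finset.mem_image.1 (hS hz)
      exact subset_affineSpan ℝ _ ⟨j, rfl⟩
  have htop := hAI.affineSpan_eq_top_iff_card_eq_finrank_add_one.2 (by simp)
  obtain ⟨l, hl1, hl⟩ := eq_affineCombination_of_mem_affineSpan_of_fintype
    (htop ▸ AffineSubspace.mem_top ℝ _ w : w ∈ affineSpan ℝ (Set.range fun j => y (p j)))
  refine ⟨l, hl1, ?_⟩
  rw [hl, Finset.affineCombination_eq_linear_combination _ _ _ hl1]

def TV {V : Type*} [Fintype V] [DecidableEq V] {d : ℕ} (r : ℕ) (y : V → Fin d → ℝ)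
    (c : V → Fin (d + 2)) (x : Fin d → ℝ) (P : Finset (Finset V)) : Prop :=
  P.card = r ∧ (∀ B ∈ P, ∀ B' ∈ P, B ≠ B' → Disjoint B B') ∧ P.biUnion id = Finset.univ ∧
    (∀ B ∈ P, Set.InjOn c B) ∧ ∀ B ∈ P, x ∈ convexHull ℝ (y '' (B : Set V))

lemma drop_vertex {V : Type*} [DecidableEq V] {d : ℕ} (y : V → Fin d → ℝ)
    (hinj : Function.Injective y) (x : Fin d → ℝ) (B : Finset V) (hB : B.card = d + 2)
    (hx : x ∈ convexHull ℝ (y '' (B : Set V))) :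
    ∃ v ∈ B, x ∈ convexHull ℝ (y '' ((B.erase v : Finset V) : Set V)) := by
  rw [convexHull_eq_union] at hx
  simp only [Set.mem_iUnion] at hx
  obtain ⟨T, hT, hAI, hxT⟩ := hx
  have hTc : T.card ≤ d + 1 := by
    have := hAI.card_le_finrank_succ
    refine le_trans (by simpa using this) (Nat.succ_le_succ ?_)
    refine le_trans (Submodule.finrank_le _) (by simp)
  obtain ⟨v, hv, hvT⟩ : ∃ v ∈ B, y v ∉ T := by
    by_contra! h
    have : B.card ≤ T.card := Finset.card_le_card_of_injOn y h hinj.injOn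
    omega
  refine ⟨v, hv, convexHull_mono ?_ hxT⟩
  intro z hz
  obtain ⟨u, hu, rfl⟩ := hT hz
  refine ⟨u, Finset.mem_coe.2 (Finset.mem_erase.2 ⟨?_, hu⟩), rfl⟩
  rintro rfl
  exact hvT hz

lemma tv_sum {V : Type*} [Fintype V] [DecidableEq V] {d : ℕ} {r : ℕ} {y : V → Fin d → ℝ}
    {c : V → Fin (d + 2)} {x : Fin d → ℝ} {P : Finset (Finset V)} (hP : TV r y c x P) :
    ∑ B ∈ P, B.card = Fintype.card V := by
  rw [← Finset.card_univ, ← hP.2.2.1, Finset.card_biUnion]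
  · rfl
  · exact hP.2.1

lemma tv_fix {V : Type*} [Fintype V] [DecidableEq V] {d : ℕ} {r : ℕ} (hr : 1 ≤ r)
    {y : V → Fin d → ℝ} (hinj : Function.Injective y) {c : V → Fin (d + 2)} {x : Fin d → ℝ}
    (hV : Fintype.card V = (d + 1) * (r - 1) + 1)
    (hlast : ∀ u v, c u = Fin.last (d + 1) → c v = Fin.last (d + 1) → u = v)
    (hcol : ∀ j, j ≠ Fin.last (d + 1) → (Finset.univ.filter fun i => c i = j).card < r)
    {P : Finset (Finset V)} (hP : TV r y c x P) :
    ∃ Q, TV r y c x Q ∧ ∀ B ∈ Q, B.card ≤ d + 1 := by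
  by_cases hbig : ∃ B ∈ P, d + 1 < B.card
  swap
  · push Not at hbig; exact ⟨P, hP, hbig⟩
  obtain ⟨B0, hB0, hB0c⟩ := hbig
  have hsum := tv_sum hP
  obtain ⟨hPc, hPd, hPU, hPr, hPx⟩ := hP
  have hle : ∀ B ∈ P, B.card ≤ d + 2 := by
    intro B hB
    rw [← Finset.card_image_of_injOn (hPr B hB)]
    exact le_trans (Finset.card_le_univ _) (by simp)
  have hB0c' : B0.card = d + 2 := le_antisymm (hle _ hB0) hB0c
  have hB0im : B0.image c = Finset.univ := by
    rw [← Finset.card_eq_iff_eq_univ, Finset.card_image_of_injOn (hPr _ hB0), hB0c']; simp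
  obtain ⟨v0, hv0, hcv0⟩ : ∃ v0 ∈ B0, c v0 = Fin.last (d + 1) := by
    have := hB0im ▸ Finset.mem_univ (Fin.last (d + 1))
    simpa using this
  have hPeq : ∀ B ∈ P, ∀ B' ∈ P, ∀ a, a ∈ B → a ∈ B' → B = B' := by
    intro B hB B' hB' a h h'
    by_contra hne
    exact Finset.disjoint_left.1 (hPd B hB B' hB' hne) h h'
  have hnl : ∀ B ∈ P, B ≠ B0 → ∀ u ∈ B, c u ≠ Fin.last (d + 1) := by
    intro B hB hne u hu hcu
    have := hlast u v0 hcu hcv0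
    exact hne (hPeq B hB B0 hB0 u hu (this ▸ hv0))
  have hle1 : ∀ B ∈ P, B ≠ B0 → B.card ≤ d + 1 := by
    intro B hB hne
    have : B.image c ⊆ Finset.univ.erase (Fin.last (d + 1)) := by
      intro j hj
      obtain ⟨u, hu, rfl⟩ := Finset.mem_image.1 hj
      exact Finset.mem_erase.2 ⟨hnl B hB hne u hu, Finset.mem_univ _⟩
    have := Finset.card_le_card this
    rw [Finset.card_image_of_injOn (hPr _ hB), Finset.card_erase_of_mem (Finset.mem_univ _)] at this
    simpa using this
  obtain ⟨v, hv, hxv⟩ := drop_vertex y hinj x B0 hB0c' (hPx _ hB0)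
  obtain ⟨B1, hB1, hB10, hB1c, hB1v⟩ :
      ∃ B1 ∈ P, B1 ≠ B0 ∧ B1.card ≤ d ∧ ∀ u ∈ B1, c u ≠ c v := by
    by_cases hcv : c v = Fin.last (d + 1)
    · by_contra! hcon
      have hge : ∀ B ∈ P.erase B0, d + 1 ≤ B.card := by
        intro B hB
        obtain ⟨hne, hB⟩ := Finset.mem_erase.1 hB
        by_contra! hlt
        obtain ⟨u, hu, hcu⟩ := hcon B hB hne (by omega)
        exact hnl B hB hne u hu (hcu.trans hcv)
      have h1 := Finset.card_nsmul_le_sum (P.erase B0) (fun B => B.card) (d + 1) hge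
      rw [← Finset.add_sum_erase P (fun B => B.card) hB0, hV, hB0c'] at hsum
      rw [Finset.card_erase_of_mem hB0, hPc, smul_eq_mul, mul_comm] at h1
      omega
    · have : ∃ B1 ∈ P, ∀ u ∈ B1, c u ≠ c v := by
        by_contra! hcon
        have : Nonempty V := ⟨v⟩
        choose! g hg hgc using hcon
        have h1 : P.card ≤ (Finset.univ.filter fun i => c i = c v).card :=
          Finset.card_le_card_of_injOn g
            (fun B hB => Finset.mem_coe.2 (Finset.mem_filter.2 ⟨Finset.mem_univ _, hgc B hB⟩))
            (fun B hB B' hB' h => hPeq B hB B' hB' (g B) (hg B hB) (h ▸ hg B' hB'))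
        have h2 := hcol _ hcv
        omega
      obtain ⟨B1, hB1, hB1v⟩ := this
      have hne : B1 ≠ B0 := by rintro rfl; exact hB1v v hv rfl
      refine ⟨B1, hB1, hne, ?_, hB1v⟩
      have : B1.image c ⊆ (Finset.univ.erase (Fin.last (d + 1))).erase (c v) := by
        intro j hj
        obtain ⟨u, hu, rfl⟩ := Finset.mem_image.1 hj
        exact Finset.mem_erase.2 ⟨hB1v u hu,
          Finset.mem_erase.2 ⟨hnl B1 hB1 hne u hu, Finset.mem_univ _⟩⟩
      have := Finset.card_le_card this
      rw [Finset.card_image_of_injOn (hPr _ hB1), Finset.card_erase_of_mem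
        (Finset.mem_erase.2 ⟨hcv, Finset.mem_univ _⟩),
        Finset.card_erase_of_mem (Finset.mem_univ _)] at this
      simpa using this
  let φ : Finset V → Finset V := fun B =>
    if B = B0 then B0.erase v else if B = B1 then insert v B1 else B
  have hφ : ∀ B ∈ P, ∀ a, a ∈ φ B ↔ (a ≠ v ∧ a ∈ B) ∨ (a = v ∧ B = B1) := by
    intro B hB a
    simp only [φ]
    split_ifs with h1 h2
    · subst h1
      rw [Finset.mem_erase]
      have : B ≠ B1 := fun h => hB10 h.symm
      tauto
    · subst h2
      rw [Finset.mem_insert]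
      tauto
    · constructor
      · intro ha
        refine Or.inl ⟨?_, ha⟩
        rintro rfl
        exact h1 (hPeq B hB B0 hB0 a ha hv)
      · rintro (h | h)
        · exact h.2
        · exact absurd h.2 h2
  have hφeq : ∀ B ∈ P, ∀ C ∈ P, ∀ a, a ∈ φ B → a ∈ φ C → B = C := by
    intro B hB C hC a h h'
    rw [hφ B hB] at h
    rw [hφ C hC] at h'
    rcases h with h | h <;> rcases h' with h' | h'
    · exact hPeq B hB C hC a h.2 h'.2
    · exact absurd h'.1 h.1
    · exact absurd h.1 h'.1
    · exact h.2.trans h'.2.symm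
  have hφx : ∀ B ∈ P, x ∈ convexHull ℝ (y '' (φ B : Set V)) := by
    intro B hB
    by_cases h : B = B0
    · simpa [φ, h] using hxv
    · refine convexHull_mono (Set.image_mono ?_) (hPx B hB)
      intro a ha
      refine Finset.mem_coe.2 ((hφ B hB a).2 (Or.inl ⟨?_, ha⟩))
      rintro rfl
      exact h (hPeq B hB B0 hB0 a ha hv)
  have hφne : ∀ B ∈ P, (φ B).Nonempty := by
    intro B hB
    have := hφx B hB
    have h1 : (y '' (φ B : Set V)).Nonempty := convexHull_nonempty_iff.1 ⟨x, this⟩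
    simpa using h1
  refine ⟨P.image φ, ⟨?_, ?_, ?_, ?_, ?_⟩, ?_⟩
  · rw [Finset.card_image_of_injOn, hPc]
    intro B hB C hC h
    obtain ⟨a, ha⟩ := hφne B hB
    exact hφeq B hB C hC a ha (h ▸ ha)
  · intro B' hB' C' hC' hne
    obtain ⟨B, hB, rfl⟩ := Finset.mem_image.1 hB'
    obtain ⟨C, hC, rfl⟩ := Finset.mem_image.1 hC'
    rw [Finset.disjoint_left]
    intro a ha ha'
    exact hne (congrArg φ (hφeq B hB C hC a ha ha'))
  · rw [Finset.eq_univ_iff_forall]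
    intro a
    rw [Finset.mem_biUnion]
    by_cases ha : a = v
    · exact ⟨φ B1, Finset.mem_image_of_mem _ hB1, (hφ B1 hB1 a).2 (Or.inr ⟨ha, rfl⟩)⟩
    · have : a ∈ P.biUnion id := hPU ▸ Finset.mem_univ a
      obtain ⟨B, hB, haB⟩ := Finset.mem_biUnion.1 this
      exact ⟨φ B, Finset.mem_image_of_mem _ hB, (hφ B hB a).2 (Or.inl ⟨ha, haB⟩)⟩
  · intro B' hB'
    obtain ⟨B, hB, rfl⟩ := Finset.mem_image.1 hB'
    intro a ha b hb hab
    rcases (hφ B hB a).1 ha with h | h <;> rcases (hφ B hB b).1 hb with h' | h'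
    · exact hPr B hB h.2 h'.2 hab
    · exact absurd (h'.1 ▸ hab) (hB1v a (h'.2 ▸ h.2))
    · exact absurd (h.1 ▸ hab.symm) (hB1v b (h.2 ▸ h'.2))
    · exact h.1.trans h'.1.symm
  · intro B' hB'
    obtain ⟨B, hB, rfl⟩ := Finset.mem_image.1 hB'
    exact hφx B hB
  · intro B' hB'
    obtain ⟨B, hB, rfl⟩ := Finset.mem_image.1 hB'
    simp only [φ]
    split_ifs with h1 h2
    · rw [Finset.card_erase_of_mem hv, hB0c']; rfl
    · exact le_trans (Finset.card_insert_le _ _) (by omega)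
    · exact hle1 B hB h1

lemma tv_count {V : Type*} [Fintype V] [DecidableEq V] {d : ℕ} (hd : 1 ≤ d) {r : ℕ} (hr : 1 ≤ r)
    {y : V → Fin d → ℝ} (hinj : Function.Injective y) {c : V → Fin (d + 2)} {x : Fin d → ℝ}
    (hy : ∀ p : Fin (d + 1) → V, Function.Injective p → ∀ w,
      ∃ l : Fin (d + 1) → ℝ, ∑ j, l j = 1 ∧ ∑ j, l j • y (p j) = w)
    (hV : Fintype.card V = (d + 1) * (r - 1) + 1)
    (hlast : ∀ u v, c u = Fin.last (d + 1) → c v = Fin.last (d + 1) → u = v)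
    (hcol : ∀ j, j ≠ Fin.last (d + 1) → (Finset.univ.filter fun i => c i = j).card < r)
    (hex : ∃ P, TV r y c x P) :
    2 ^ (r - 2 * d - 1) ≤ (Finset.univ.filter fun P => TV r y c x P).card := by
  obtain ⟨P', hP'⟩ := hex
  obtain ⟨P0, hP0, hle⟩ := tv_fix hr hinj hV hlast hcol hP'
  have hsum := tv_sum hP0
  obtain ⟨hPc, hPd, hPU, hPr, hPx⟩ := hP0
  have hPeq : ∀ B ∈ P0, ∀ B' ∈ P0, ∀ a, a ∈ B → a ∈ B' → B = B' := by
    intro B hB B' hB' a h h'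
    by_contra hne
    exact Finset.disjoint_left.1 (hPd B hB B' hB' hne) h h'
  set P := P0.filter fun B => B.card = d + 1 with hPdef
  have hPP0 : P ⊆ P0 := Finset.filter_subset _ _
  have hPcard : r - d ≤ P.card := by
    have h1 : ∑ B ∈ P0, B.card ≤ ∑ B ∈ P0, (d + if B.card = d + 1 then 1 else 0) := by
      refine Finset.sum_le_sum fun B hB => ?_
      have := hle B hB
      split_ifs <;> omega
    rw [Finset.sum_add_distrib, ← Finset.card_filter, hsum, hV, Finset.sum_const, hPc,
      smul_eq_mul, ← hPdef] at h1
    obtain ⟨q, rfl⟩ : ∃ q, r = q + 1 := ⟨r - 1, by omega⟩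
    simp only [Nat.add_sub_cancel] at h1
    have : (d + 1) * q + 1 ≤ d * q + d + P.card := by
      calc _ ≤ _ := h1
        _ = _ := by ring
    have h3 : (d + 1) * q = d * q + q := by ring
    omega
  obtain ⟨m, hm⟩ : ∃ m : Fin (d + 1), ∀ B ∈ P, ∀ v ∈ B, c v = Fin.last (d + 1) →
      ∀ u ∈ B, c u ≠ m.castSucc := by
    by_cases h : ∃ B ∈ P, ∃ v ∈ B, c v = Fin.last (d + 1)
    · obtain ⟨B, hB, v, hv, hcv⟩ := h
      have hBc : B.card = d + 1 := (Finset.mem_filter.1 hB).2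
      obtain ⟨j, hj⟩ : ∃ j, j ∉ B.image c := by
        by_contra! hall
        have := Finset.card_eq_iff_eq_univ (B.image c) |>.2 (Finset.eq_univ_iff_forall.2 hall)
        rw [Finset.card_image_of_injOn (hPr B (hPP0 hB)), hBc] at this
        simp at this
      have hjl : j ≠ Fin.last (d + 1) := by
        rintro rfl
        exact hj (Finset.mem_image.2 ⟨v, hv, hcv⟩)
      refine ⟨j.castPred hjl, ?_⟩
      intro B' hB' v' hv' hcv' u hu hcu
      have hvv := hlast v v' hcv hcv'
      have hBB := hPeq B (hPP0 hB) B' (hPP0 hB') v hv (hvv ▸ hv')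
      rw [Fin.castSucc_castPred] at hcu
      exact hj (Finset.mem_image.2 ⟨u, hBB ▸ hu, hcu⟩)
    · push Not at h
      exact ⟨0, fun B hB v hv hcv => absurd hcv (h B hB v hv)⟩
  let c' : V → Fin (d + 1) := fun v =>
    if h : c v = Fin.last (d + 1) then m else (c v).castPred h
  have hc' : ∀ u v, c u = c v → c' u = c' v := by
    intro u v h
    simp only [c', h]
  have hcs : ∀ v, c v ≠ Fin.last (d + 1) → c v = (c' v).castSucc := by
    intro v hv
    simp [c', hv]
  have hcl : ∀ v, c v = Fin.last (d + 1) → c' v = m := by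
    intro v hv
    simp [c', hv]
  have hF : Fam y x c' P := by
    refine ⟨fun B hB => ⟨(Finset.mem_filter.1 hB).2, ?_, hPx B (hPP0 hB)⟩,
      fun B hB B' hB' => hPd B (hPP0 hB) B' (hPP0 hB')⟩
    intro u hu v hv huv
    by_cases h1 : c u = Fin.last (d + 1) <;> by_cases h2 : c v = Fin.last (d + 1)
    · exact hlast u v h1 h2
    · exact absurd (by rw [hcs v h2, ← huv, hcl u h1]) (hm B hB u hu h1 v hv)
    · exact absurd (by rw [hcs u h1, huv, hcl v h2]) (hm B hB v hv h2 u hu)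
    · exact hPr B (hPP0 hB) hu hv (by rw [hcs u h1, hcs v h2, huv])
  have hcount := fam_count hd y x c' hy P.card P hF rfl
  refine le_trans (le_trans (Nat.pow_le_pow_right (by norm_num) (by omega)) hcount) ?_
  have hne : ∀ B ∈ P0, B.Nonempty := by
    intro B hB
    have h1 : (y '' (B : Set V)).Nonempty := convexHull_nonempty_iff.1 ⟨x, hPx B hB⟩
    simpa using h1
  have hdisj : ∀ R : Finset (Finset V), R.biUnion id = P.biUnion id → ∀ B ∈ R,
      ∀ C ∈ P0 \ P, Disjoint B C := by
    intro R hR B hB C hC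
    rw [Finset.disjoint_left]
    intro a ha haC
    have : a ∈ R.biUnion id := Finset.mem_biUnion.2 ⟨B, hB, ha⟩
    rw [hR] at this
    obtain ⟨D, hD, haD⟩ := Finset.mem_biUnion.1 this
    obtain ⟨hC0, hCP⟩ := Finset.mem_sdiff.1 hC
    exact hCP (hPeq D (hPP0 hD) C hC0 a haD haC ▸ hD)
  have hRO : ∀ R : Finset (Finset V), R.biUnion id = P.biUnion id → Disjoint R (P0 \ P) := by
    intro R hR
    rw [Finset.disjoint_left]
    intro B hB hBO
    exact (hne B (Finset.mem_sdiff.1 hBO).1).ne_empty (disjoint_self.1 (hdisj R hR B hB B hBO))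
  refine Finset.card_le_card_of_injOn (fun R => R ∪ (P0 \ P)) ?_ ?_
  · intro R hR
    obtain ⟨hRF, hRU, hRc⟩ := (Finset.mem_filter.1 hR).2
    refine Finset.mem_coe.2 (Finset.mem_filter.2 ⟨Finset.mem_univ _, ?_, ?_, ?_, ?_, ?_⟩)
    · rw [Finset.card_union_of_disjoint (hRO R hRU), hRc, Finset.card_sdiff_of_subset hPP0, hPc]
      have := Finset.card_le_card hPP0
      omega
    · intro B hB C hC hBC
      rcases Finset.mem_union.1 hB with hB1 | hB1 <;> rcases Finset.mem_union.1 hC with hC1 | hC1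
      · exact hRF.2 B hB1 C hC1 hBC
      · exact hdisj R hRU B hB1 C hC1
      · exact (hdisj R hRU C hC1 B hB1).symm
      · exact hPd B (Finset.mem_sdiff.1 hB1).1 C (Finset.mem_sdiff.1 hC1).1 hBC
    · rw [Finset.union_biUnion, hRU, ← Finset.union_biUnion, Finset.union_sdiff_of_subset hPP0, hPU]
    · intro B hB
      rcases Finset.mem_union.1 hB with hB1 | hB1
      · intro u hu v hv huv
        exact (hRF.1 B hB1).2.1 hu hv (hc' u v huv)
      · exact hPr B (Finset.mem_sdiff.1 hB1).1
    · intro B hB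
      rcases Finset.mem_union.1 hB with hB1 | hB1
      · exact (hRF.1 B hB1).2.2
      · exact hPx B (Finset.mem_sdiff.1 hB1).1
  · intro R hR S hS hRS
    have h1 := hRO R (Finset.mem_filter.1 hR).2.2.1
    have h2 := hRO S (Finset.mem_filter.1 hS).2.2.1
    have := congrArg (fun X => X \ (P0 \ P)) hRS
    simpa [Finset.union_sdiff_cancel_right h1, Finset.union_sdiff_cancel_right h2] using this

end Aux3

/-- For `d ≥ 2` and an arbitrary integer `r ≥ 2d + 2` (not necessarily prime), with
`N = (d+1)(r-1)`: for any affine map `f` on the standard `N`-simplex whose vertices are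
colored with `d + 2` colors with color classes `|C_0| = … = |C_d| = r - 1`, `|C_{d+1}| = 1`,
and whose `N + 1` vertex images are in general position, if `T(f) > 0` then
`T(f) ≥ 2^(r - 2d - 1)`. -/
theorem tverbergCount_lower_bound_of_pos (d r N : ℕ) (hd : 2 ≤ d) (hr : 2 * d + 2 ≤ r)
    (hN : N = (d + 1) * (r - 1))
    (f : (Fin (N + 1) → ℝ) →ᵃ[ℝ] (Fin d → ℝ))
    (c : Fin (N + 1) → Fin (d + 2))
    (hc : ∀ j : Fin (d + 2),
      (Finset.univ.filter fun i => c i = j).card = if (j : ℕ) = d + 1 then 1 else r - 1)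
    (hinj : Function.Injective fun i : Fin (N + 1) => f (Pi.single i 1))
    (hgen : GenPos d (Set.range fun i : Fin (N + 1) => f (Pi.single i 1)))
    (hpos : 0 < tverbergCount d N r f c) :
    2 ^ (r - 2 * d - 1) ≤ tverbergCount d N r f c := by
  have hrain : ∀ B : Finset (Fin (N + 1)),
      (∀ j : Fin (d + 2), (B.filter fun i => c i = j).card ≤ 1) ↔ Set.InjOn c B := by
    intro B
    constructor
    · intro h u hu v hv huv
      exact Finset.card_le_one.1 (h (c v)) u (Finset.mem_filter.2 ⟨hu, huv⟩) v
        (Finset.mem_filter.2 ⟨hv, rfl⟩)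
    · intro h j
      refine Finset.card_le_one.2 fun u hu v hv => ?_
      obtain ⟨hu, hu'⟩ := Finset.mem_filter.1 hu
      obtain ⟨hv, hv'⟩ := Finset.mem_filter.1 hv
      exact h hu hv (hu'.trans hv'.symm)
  obtain ⟨P, hP⟩ := Set.nonempty_of_ncard_ne_zero hpos.ne'
  obtain ⟨h1, h2, h3, h4, x, h5⟩ := hP
  have hcount := tv_count (V := Fin (N + 1)) (d := d) (r := r) (c := c) (x := x)
    (by omega) (by omega) hinj
    (span_of_genPos (by omega) _ hinj hgen) (by simp [hN]) (by
      intro u v hu hv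
      have := hc (Fin.last (d + 1))
      simp only [Fin.val_last, if_true] at this
      exact Finset.card_le_one.1 this.le u (by simp [hu]) v (by simp [hv])) (by
      intro j hj
      have hj' : (j : ℕ) ≠ d + 1 := fun h => hj (Fin.ext h)
      have := hc j
      rw [if_neg hj'] at this
      rw [this]; omega)
    ⟨P, h1, h2, h3, fun B hB => (hrain B).1 (h4 B hB), h5⟩
  refine le_trans hcount ?_
  rw [← Set.ncard_coe_finset]
  refine Set.ncard_le_ncard ?_ (Set.toFinite _)
  intro Q hQ
  obtain ⟨g1, g2, g3, g4, g5⟩ := (Finset.mem_filter.1 (Finset.mem_coe.1 hQ)).2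
  exact ⟨g1, g2, g3, fun B hB => (hrain B).2 (g4 B hB), x, g5⟩
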